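/- arXiv:2408.08055 — 5 statements merged into one kernel-verified Lean document; each statement's English description precedes it below -/
import Mathlib

section
/- Let f : ℝ^u × ℝ^v → ℝ^v satisfy ‖f(x₁,h) − f(x₂,h)‖₂ ≤ L_x‖x₁ − x₂‖₂ and ‖f(x,h₁) − f(x,h₂)‖₂ ≤ L_h‖h₁ − h₂‖₂ for all arguments, and f(0,0) = 0. Suppose a, b, L_h ∈ (0,1) with a·L_h < b, and let ε ∈ (0,1). Then for every x ∈ ℝ^u and every h ∈ ℝ^v with ‖h‖₂ ≥ (a·L_x/((b − a·L_h)(1 − ε)))·‖x‖₂, one has ⟨h, a·f(x,h) − b·h⟩ ≤ −ε(b − a·L_h)‖h‖₂². -/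
open RealInnerProductSpace

/-- ISS-Lyapunov decrease condition (paper, proof of Theorem 2): whenever
`‖h‖ ≥ (a·L_x/((b − a·L_h)(1 − ε)))·‖x‖`, one has
`⟨h, a·f(x,h) − b·h⟩ ≤ −ε(b − a·L_h)‖h‖²`. -/
theorem iss_lyapunov_decrease
    (u v : ℕ)
    (f : EuclideanSpace ℝ (Fin u) × EuclideanSpace ℝ (Fin v) → EuclideanSpace ℝ (Fin v))
    (Lx Lh : ℝ)
    (hfx : ∀ x₁ x₂ h, ‖f (x₁, h) - f (x₂, h)‖ ≤ Lx * ‖x₁ - x₂‖)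
    (hfh : ∀ x h₁ h₂, ‖f (x, h₁) - f (x, h₂)‖ ≤ Lh * ‖h₁ - h₂‖)
    (hf0 : f (0, 0) = 0)
    (a b : ℝ) (ha : a ∈ Set.Ioo (0 : ℝ) 1) (hb : b ∈ Set.Ioo (0 : ℝ) 1)
    (hLh : Lh ∈ Set.Ioo (0 : ℝ) 1) (hab : a * Lh < b)
    (ε : ℝ) (hε : ε ∈ Set.Ioo (0 : ℝ) 1) :
    ∀ (x : EuclideanSpace ℝ (Fin u)) (h : EuclideanSpace ℝ (Fin v)),
      ‖h‖ ≥ a * Lx / ((b - a * Lh) * (1 - ε)) * ‖x‖ →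
      ⟪h, a • f (x, h) - b • h⟫ ≤ -(ε * (b - a * Lh)) * ‖h‖ ^ 2 := by
  intro x h hh
  obtain ⟨ha0, _⟩ := ha
  obtain ⟨_, hε1⟩ := hε
  have hD : 0 < (b - a * Lh) * (1 - ε) := mul_pos (by linarith) (by linarith)
  have h1 : a * Lx * ‖x‖ ≤ ‖h‖ * ((b - a * Lh) * (1 - ε)) := by
    rw [ge_iff_le, div_mul_eq_mul_div, div_le_iff₀ hD] at hh
    exact hh
  have h2 := hfx x 0 h
  have h3 := hfh 0 h 0
  rw [hf0, sub_zero, sub_zero] at h3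
  rw [sub_zero] at h2
  have h4 : ‖f (x, h)‖ ≤ Lx * ‖x‖ + Lh * ‖h‖ := by
    have h5 := norm_add_le (f (x, h) - f (0, h)) (f (0, h))
    rw [sub_add_cancel] at h5
    linarith
  have h6 := real_inner_le_norm h (f (x, h))
  rw [inner_sub_right, real_inner_smul_right, real_inner_smul_right, real_inner_self_eq_norm_sq]
  have h7 : a * ‖f (x, h)‖ ≤ ‖h‖ * ((b - a * Lh) * (1 - ε)) + a * Lh * ‖h‖ := by
    have := mul_le_mul_of_nonneg_left h4 ha0.le
    linarith
  have h8 := mul_le_mul_of_nonneg_left h7 (norm_nonneg h)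
  have h9 := mul_le_mul_of_nonneg_left h6 ha0.le
  linarith
end

section
/- Let f : ℝ^u × ℝ^v → ℝ^v satisfy ‖f(x₁,h) − f(x₂,h)‖₂ ≤ L_x‖x₁ − x₂‖₂ and ‖f(x,h₁) − f(x,h₂)‖₂ ≤ L_h‖h₁ − h₂‖₂ for all arguments, and f(0,0) = 0. Suppose a, b, L_h ∈ (0,1) with a·L_h < b. Let x̂ : [0,∞) → ℝ^u be continuous and bounded, and let h : [0,∞) → ℝ^v be differentiable with h'(t) = a·f(x̂(t), h(t)) − b·h(t) for all t ≥ 0 and h(0) = h₀. Then for every t ≥ 0, ‖h(t)‖₂ ≤ e^{−(b − a·L_h)t}‖h₀‖₂ + (a·L_x/(b − a·L_h))·sup_{s∈[0,t]}‖x̂(s)‖₂. -/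
/-- Input-to-state stability of the negative-feedback ODE (paper, Theorem 2), in explicit form:
`‖h(t)‖ ≤ e^{−(b − a·L_h)t}‖h₀‖ + (a·L_x/(b − a·L_h))·sup_{s∈[0,t]}‖x̂(s)‖`. -/
theorem negative_feedback_input_to_state_stable
    (u v : ℕ)
    (f : EuclideanSpace ℝ (Fin u) × EuclideanSpace ℝ (Fin v) → EuclideanSpace ℝ (Fin v))
    (Lx Lh : ℝ)
    (hfx : ∀ x₁ x₂ h, ‖f (x₁, h) - f (x₂, h)‖ ≤ Lx * ‖x₁ - x₂‖)
    (hfh : ∀ x h₁ h₂, ‖f (x, h₁) - f (x, h₂)‖ ≤ Lh * ‖h₁ - h₂‖)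
    (hf0 : f (0, 0) = 0)
    (a b : ℝ) (ha : a ∈ Set.Ioo (0 : ℝ) 1) (hb : b ∈ Set.Ioo (0 : ℝ) 1)
    (hLh : Lh ∈ Set.Ioo (0 : ℝ) 1) (hab : a * Lh < b)
    (xhat : ℝ → EuclideanSpace ℝ (Fin u))
    (hxc : ContinuousOn xhat (Set.Ici 0))
    (hxb : ∃ C, ∀ t ∈ Set.Ici (0 : ℝ), ‖xhat t‖ ≤ C)
    (h : ℝ → EuclideanSpace ℝ (Fin v)) (h₀ : EuclideanSpace ℝ (Fin v))
    (hd : ∀ t ≥ (0 : ℝ), HasDerivAt h (a • f (xhat t, h t) - b • h t) t)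
    (hinit : h 0 = h₀) :
    ∀ t ≥ (0 : ℝ),
      ‖h t‖ ≤ Real.exp (-(b - a * Lh) * t) * ‖h₀‖ +
        a * Lx / (b - a * Lh) * sSup ((fun s => ‖xhat s‖) '' Set.Icc 0 t) := by
  intro t ht
  obtain ⟨ha0, -⟩ := ha
  obtain ⟨hL0, -⟩ := hLh
  have hc : 0 < b - a * Lh := by linarith
  obtain ⟨C, hC⟩ := hxb
  set M := sSup ((fun s => ‖xhat s‖) '' Set.Icc 0 t) with hM
  have hbdd : BddAbove ((fun s => ‖xhat s‖) '' Set.Icc 0 t) := by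
    refine ⟨C, ?_⟩
    rintro _ ⟨s, hs, rfl⟩
    exact hC s hs.1
  have hxM : ∀ s ∈ Set.Icc 0 t, ‖xhat s‖ ≤ M := fun s hs => le_csSup hbdd ⟨s, hs, rfl⟩
  have hLM : ∀ s ∈ Set.Icc 0 t, Lx * ‖xhat s‖ ≤ Lx * M := by
    intro s hs
    rcases le_or_gt 0 Lx with hp | hn
    · exact mul_le_mul_of_nonneg_left (hxM s hs) hp
    · have hz : ∀ x : EuclideanSpace ℝ (Fin u), ‖x‖ ≤ 0 := by
        intro x
        have h1 := (norm_nonneg _).trans (hfx x 0 0)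
        rw [sub_zero] at h1
        by_contra hx
        push Not at hx
        nlinarith [mul_pos (neg_pos.mpr hn) hx]
      have hM0 : M ≤ 0 := by
        refine csSup_le ⟨_, s, hs, rfl⟩ ?_
        rintro _ ⟨r, -, rfl⟩
        exact hz _
      have h2 : ‖xhat s‖ = 0 := le_antisymm (hz _) (norm_nonneg _)
      have h3 := hxM s hs
      have h4 : M = 0 := by linarith
      rw [h2, h4]
  have hfb : ∀ s ∈ Set.Icc 0 t, ‖f (xhat s, h s)‖ ≤ Lx * M + Lh * ‖h s‖ := by
    intro s hs
    have h1 := hfx (xhat s) 0 0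
    have h2 := hfh (xhat s) (h s) 0
    rw [hf0, sub_zero, sub_zero] at h1
    rw [sub_zero] at h2
    have h3 := norm_le_norm_sub_add (f (xhat s, h s)) (f (xhat s, 0))
    linarith [hLM s hs]
  refine le_of_forall_pos_le_add fun η hη => ?_
  set K := a * Lx / (b - a * Lh) * M + η with hK
  have hKc : a * (Lx * M) < (b - a * Lh) * K := by
    have : (b - a * Lh) * K = a * (Lx * M) + (b - a * Lh) * η := by
      rw [hK]; field_simp
    rw [this]
    linarith [mul_pos hc hη]
  have hexp : ∀ k s : ℝ, HasDerivAt (fun s => Real.exp (k * s)) (k * Real.exp (k * s)) s := by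
    intro k s
    have := ((hasDerivAt_id s).const_mul k).exp
    simpa [mul_comm] using this
  have hg : ∀ s ≥ (0 : ℝ), HasDerivAt (fun s => Real.exp (b * s) • h s)
      ((a * Real.exp (b * s)) • f (xhat s, h s)) s := by
    intro s hs
    have := (hexp b s).smul (hd s hs)
    refine this.congr_deriv ?_
    module
  have hK0 : 0 ≤ K := by
    have h0 : (0 : ℝ) ∈ Set.Icc 0 t := ⟨le_rfl, ht⟩
    have h1 := (norm_nonneg _).trans (hfx (xhat 0) 0 0)
    rw [sub_zero] at h1
    have h2 := mul_nonneg ha0.le (h1.trans (hLM 0 h0))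
    by_contra hk
    push Not at hk
    nlinarith
  have key := image_norm_le_of_norm_deriv_right_lt_deriv_boundary
    (f := fun s => Real.exp (b * s) • h s)
    (f' := fun s => (a * Real.exp (b * s)) • f (xhat s, h s)) (a := 0) (b := t)
    (B := fun s => Real.exp ((a * Lh) * s) * ‖h₀‖ + Real.exp (b * s) * K)
    (B' := fun s => (a * Lh) * Real.exp ((a * Lh) * s) * ‖h₀‖ + b * Real.exp (b * s) * K)
    (fun s hs => (hg s hs.1).continuousAt.continuousWithinAt)
    (fun s hs => (hg s hs.1).hasDerivWithinAt)
    (by simp [hinit, hK0])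
    (fun s => ((hexp (a * Lh) s).mul_const _).add ((hexp b s).mul_const _))
    (by
      intro s hs heq
      have hE := Real.exp_pos (b * s)
      have h1 := hfb s ⟨hs.1, hs.2.le⟩
      simp only [norm_smul, Real.norm_eq_abs, abs_of_pos hE] at heq
      rw [norm_smul, Real.norm_eq_abs, abs_of_pos (mul_pos ha0 hE)]
      have h2 := mul_le_mul_of_nonneg_left h1 (mul_pos ha0 hE).le
      have h3 := mul_lt_mul_of_pos_left hKc hE
      have h4 : a * Real.exp (b * s) * (Lx * M + Lh * ‖h s‖) =
        Real.exp (b * s) * (a * (Lx * M)) + a * Lh * (Real.exp (b * s) * ‖h s‖) := by ring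
      rw [h4, heq] at h2
      linarith)
    ⟨ht, le_rfl⟩
  have hE := Real.exp_pos (b * t)
  simp only [norm_smul, Real.norm_eq_abs, abs_of_pos hE] at key
  have hsplit : Real.exp (a * Lh * t) = Real.exp (b * t) * Real.exp (-(b - a * Lh) * t) := by
    rw [← Real.exp_add]; ring_nf
  rw [hsplit, mul_assoc, ← mul_add] at key
  have := le_of_mul_le_mul_left key hE
  linarith
end

section
/- Let f : ℝ^u × ℝ^v → ℝ^v satisfy ‖f(x₁,h) − f(x₂,h)‖₂ ≤ L_x‖x₁ − x₂‖₂ and ‖f(x,h₁) − f(x,h₂)‖₂ ≤ L_h‖h₁ − h₂‖₂ for all arguments. Let a > 0, b ∈ ℝ. Then for all x̂, x ∈ ℝ^u and h, h* ∈ ℝ^v, ⟨(a·f(x̂,h) − b·h) − (a·f(x,h*) − b·h*), h − h*⟩ ≤ (a·L_h − b)‖h − h*‖₂² + a·L_x‖x̂ − x‖₂·‖h − h*‖₂. -/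
open RealInnerProductSpace

/-- Central estimate in the paper's proof of Theorem 3: for the negative-feedback vector field
`g(x,h) = a·f(x,h) − b·h`,
`⟨g(x̂,h) − g(x,h*), h − h*⟩ ≤ (a·L_h − b)‖h − h*‖² + a·L_x‖x̂ − x‖‖h − h*‖`. -/
theorem robustness_central_estimate
    (u v : ℕ)
    (f : EuclideanSpace ℝ (Fin u) × EuclideanSpace ℝ (Fin v) → EuclideanSpace ℝ (Fin v))
    (Lx Lh : ℝ)
    (hfx : ∀ x₁ x₂ h, ‖f (x₁, h) - f (x₂, h)‖ ≤ Lx * ‖x₁ - x₂‖)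
    (hfh : ∀ x h₁ h₂, ‖f (x, h₁) - f (x, h₂)‖ ≤ Lh * ‖h₁ - h₂‖)
    (a b : ℝ) (ha : 0 < a) :
    ∀ (xhat x : EuclideanSpace ℝ (Fin u)) (h hstar : EuclideanSpace ℝ (Fin v)),
      ⟪(a • f (xhat, h) - b • h) - (a • f (x, hstar) - b • hstar), h - hstar⟫ ≤
        (a * Lh - b) * ‖h - hstar‖ ^ 2 + a * Lx * ‖xhat - x‖ * ‖h - hstar‖ := by
  intro xhat x h hstar
  have e : (a • f (xhat, h) - b • h) - (a • f (x, hstar) - b • hstar)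
      = a • (f (xhat, h) - f (x, h)) + a • (f (x, h) - f (x, hstar)) - b • (h - hstar) := by
    module
  rw [e, inner_sub_left, inner_add_left, real_inner_smul_left, real_inner_smul_left,
    real_inner_smul_left, real_inner_self_eq_norm_sq]
  have h1 := (real_inner_le_norm (f (xhat, h) - f (x, h)) (h - hstar)).trans
    (mul_le_mul_of_nonneg_right (hfx xhat x h) (norm_nonneg _))
  have h2 := (real_inner_le_norm (f (x, h) - f (x, hstar)) (h - hstar)).trans
    (mul_le_mul_of_nonneg_right (hfh x h hstar) (norm_nonneg _))
  have h3 := mul_le_mul_of_nonneg_left h1 ha.le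
  have h4 := mul_le_mul_of_nonneg_left h2 ha.le
  linarith
end

section
/- Let a, b, L_h ∈ (0,1) with a·L_h < b, let J : ℝ → L(ℝ^v, ℝ^v) be a family of linear maps with operator norm ‖J(τ)‖ ≤ L_h for all τ, and let χ : ℝ → ℝ^v be differentiable with χ'(τ) = a·J(τ)(χ(τ)) − b·χ(τ) for all τ. Then at every τ₀ with χ(τ₀) ≠ 0, the derivative of τ ↦ ‖χ(τ)‖₂² at τ₀ is strictly negative; in particular ½ d/dτ ‖χ(τ₀)‖₂² ≤ (a·L_h − b)‖χ(τ₀)‖₂² < 0. -/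
/-- Forgetfulness (paper, Theorem 4): the sensitivity `χ` of the hidden state, satisfying the
variational equation `χ' = a·J(τ)χ − b·χ` with `‖J(τ)‖ ≤ L_h`, has strictly decaying norm:
at every `τ₀` with `χ(τ₀) ≠ 0`, `½ d/dτ ‖χ‖² ≤ (a·L_h − b)‖χ(τ₀)‖² < 0`. -/
theorem sensitivity_norm_strict_decay
    (vdim : ℕ) (a b Lh : ℝ)
    (ha : a ∈ Set.Ioo (0 : ℝ) 1) (hb : b ∈ Set.Ioo (0 : ℝ) 1)
    (hLh : Lh ∈ Set.Ioo (0 : ℝ) 1) (hab : a * Lh < b)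
    (J : ℝ → EuclideanSpace ℝ (Fin vdim) →L[ℝ] EuclideanSpace ℝ (Fin vdim))
    (hJ : ∀ τ, ‖J τ‖ ≤ Lh)
    (χ : ℝ → EuclideanSpace ℝ (Fin vdim))
    (hd : ∀ τ, HasDerivAt χ (a • (J τ) (χ τ) - b • χ τ) τ) :
    ∀ τ₀ : ℝ, χ τ₀ ≠ 0 →
      deriv (fun τ => ‖χ τ‖ ^ 2) τ₀ < 0 ∧
      (1 / 2) * deriv (fun τ => ‖χ τ‖ ^ 2) τ₀ ≤ (a * Lh - b) * ‖χ τ₀‖ ^ 2 ∧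
      (a * Lh - b) * ‖χ τ₀‖ ^ 2 < 0 := by
  intro τ₀ h0
  have hder : deriv (fun τ => ‖χ τ‖ ^ 2) τ₀
      = 2 * inner ℝ (χ τ₀) (a • (J τ₀) (χ τ₀) - b • χ τ₀) := (hd τ₀).norm_sq.deriv
  have hn : 0 < ‖χ τ₀‖ := norm_pos_iff.mpr h0
  have h1 : inner ℝ (χ τ₀) ((J τ₀) (χ τ₀)) ≤ Lh * ‖χ τ₀‖ ^ 2 := by
    have h2 := real_inner_le_norm (χ τ₀) ((J τ₀) (χ τ₀))
    have h3 := (J τ₀).le_of_opNorm_le (hJ τ₀) (χ τ₀)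
    have h4 := mul_le_mul_of_nonneg_left h3 hn.le
    linarith
  have h5 := mul_le_mul_of_nonneg_left h1 ha.1.le
  have hneg : (a * Lh - b) * ‖χ τ₀‖ ^ 2 < 0 :=
    mul_neg_of_neg_of_pos (by linarith) (by positivity)
  rw [inner_sub_right, real_inner_smul_right, real_inner_smul_right,
    real_inner_self_eq_norm_sq] at hder
  have hle : (1 / 2) * deriv (fun τ => ‖χ τ‖ ^ 2) τ₀ ≤ (a * Lh - b) * ‖χ τ₀‖ ^ 2 := by
    rw [hder]; linarith
  exact ⟨by linarith, hle, hneg⟩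
end

section
/- Let A be an n×n real positive definite matrix, D an m×m real positive definite matrix, B an n×m real matrix, a ∈ ℝⁿ, d ∈ ℝᵐ, and δ ∈ (0,1). Suppose that for every s ∈ [δ,1] the matrix D − s²·BᵀA⁻¹B is positive definite. Let K = [[A, B],[Bᵀ, D]] and K_δ = [[A, δB],[δBᵀ, D]] be block matrices, k the concatenation of a and d, and k_δ the concatenation of a and δ·d. Then kᵀK⁻¹k ≥ k_δᵀK_δ⁻¹k_δ. -/
open Matrix

lemma block_psd_unit {n m : ℕ} (A : Matrix (Fin n) (Fin n) ℝ) (D : Matrix (Fin m) (Fin m) ℝ)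
    (B : Matrix (Fin n) (Fin m) ℝ) (hA : A.PosDef) (s : ℝ)
    (h : (D - s ^ 2 • (Bᵀ * A⁻¹ * B)).PosDef) :
    (Matrix.fromBlocks A (s • B) (s • Bᵀ) D).PosSemidef ∧
      IsUnit (Matrix.fromBlocks A (s • B) (s • Bᵀ) D).det := by
  have : Invertible A := hA.isUnit.invertible
  have e : (s • B)ᴴ = s • Bᵀ := by
    ext i j; simp
  have e2 : D - (s • Bᵀ) * A⁻¹ * (s • B) = D - s ^ 2 • (Bᵀ * A⁻¹ * B) := by
    simp [Matrix.smul_mul, Matrix.mul_smul, smul_smul, pow_two]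
  constructor
  · have := (PosDef.fromBlocks₁₁ (s • B) D hA)
    rw [e, e2] at this
    exact this.2 h.posSemidef
  · rw [← Matrix.isUnit_iff_isUnit_det, isUnit_fromBlocks_iff_of_invertible₁₁,
      invOf_eq_nonsing_inv, e2]
    exact h.isUnit

lemma variational_bound {ι : Type*} [Fintype ι] [DecidableEq ι] (M : Matrix ι ι ℝ)
    (hM : M.PosSemidef) (hu : IsUnit M.det) (u v : ι → ℝ) :
    2 * (u ⬝ᵥ v) - u ⬝ᵥ (M *ᵥ u) ≤ v ⬝ᵥ (M⁻¹ *ᵥ v) := by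
  have hw : M *ᵥ (M⁻¹ *ᵥ v) = v := by
    rw [Matrix.mulVec_mulVec, Matrix.mul_nonsing_inv _ hu, Matrix.one_mulVec]
  have h := hM.dotProduct_mulVec_nonneg (u - M⁻¹ *ᵥ v)
  have hT : Mᵀ = M := by
    have h1 : M.IsSymm := by simpa using hM.1
    exact h1
  have hs : (M⁻¹ *ᵥ v) ⬝ᵥ (M *ᵥ u) = u ⬝ᵥ v := by
    rw [Matrix.dotProduct_mulVec, ← Matrix.mulVec_transpose, hT, hw, dotProduct_comm]
  simp only [star_trivial, Matrix.mulVec_sub, hw, sub_dotProduct, dotProduct_sub, hs] at h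
  rw [dotProduct_comm (M⁻¹ *ᵥ v) v] at h
  linarith

/-- Paper, Appendix (special case of the interval-stretching assumption): after attenuating
the cross-covariances by `δ ∈ (0,1)`, the explained variance of the Gaussian-process
prediction decreases: `kᵀK⁻¹k ≥ k_δᵀK_δ⁻¹k_δ`. -/
theorem explained_variance_decreases_under_attenuation
    (n m : ℕ) (A : Matrix (Fin n) (Fin n) ℝ) (D : Matrix (Fin m) (Fin m) ℝ)
    (B : Matrix (Fin n) (Fin m) ℝ)
    (hA : A.PosDef) (hD : D.PosDef)
    (a : Fin n → ℝ) (d : Fin m → ℝ)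
    (δ : ℝ) (hδ : δ ∈ Set.Ioo (0 : ℝ) 1)
    (hpd : ∀ s ∈ Set.Icc δ 1, (D - s ^ 2 • (Bᵀ * A⁻¹ * B)).PosDef)
    (K Kδ : Matrix (Fin n ⊕ Fin m) (Fin n ⊕ Fin m) ℝ)
    (hK : K = Matrix.fromBlocks A B Bᵀ D)
    (hKδ : Kδ = Matrix.fromBlocks A (δ • B) (δ • Bᵀ) D)
    (k kδ : Fin n ⊕ Fin m → ℝ)
    (hk : k = Sum.elim a d) (hkδ : kδ = Sum.elim a (δ • d)) :
    k ⬝ᵥ (K⁻¹ *ᵥ k) ≥ kδ ⬝ᵥ (Kδ⁻¹ *ᵥ kδ) := by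
  subst hK hKδ hk hkδ
  obtain ⟨h0, h1⟩ := hδ
  obtain ⟨p1, u1⟩ := block_psd_unit A D B hA 1 (hpd 1 ⟨h1.le, le_rfl⟩)
  obtain ⟨-, u2⟩ := block_psd_unit A D B hA δ (hpd δ ⟨le_rfl, h1.le⟩)
  simp only [one_smul] at p1 u1
  set N := Matrix.fromBlocks A (δ • B) (δ • Bᵀ) D with hN
  set w := N⁻¹ *ᵥ (Sum.elim a (δ • d)) with hw
  have hNw : N *ᵥ w = Sum.elim a (δ • d) := by
    rw [hw, Matrix.mulVec_mulVec, Matrix.mul_nonsing_inv _ u2, Matrix.one_mulVec]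
  obtain ⟨x, y, hxy⟩ : ∃ x y, w = Sum.elim x y :=
    ⟨w ∘ Sum.inl, w ∘ Sum.inr, (Sum.elim_comp_inl_inr w).symm⟩
  have hv := variational_bound _ p1 u1 (Sum.elim x (δ • y)) (Sum.elim a d)
  have hq : w ⬝ᵥ (N *ᵥ w) = w ⬝ᵥ Sum.elim a (δ • d) := by rw [hNw]
  have hy : 0 ≤ y ⬝ᵥ (D *ᵥ y) := by simpa using hD.posSemidef.dotProduct_mulVec_nonneg y
  rw [dotProduct_comm _ w]
  rw [hxy, hN] at hq
  rw [hxy]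
  simp only [Matrix.fromBlocks_mulVec, Sum.elim_comp_inl, Sum.elim_comp_inr,
    sumElim_dotProduct_sumElim, Matrix.smul_mulVec, Matrix.mulVec_smul, dotProduct_add,
    dotProduct_smul, smul_dotProduct, smul_eq_mul] at hq hv ⊢
  nlinarith [mul_nonneg (show 0 ≤ 1 - δ ^ 2 by nlinarith) hy]
end
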